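/- arXiv:1309.3989 — 6 statements merged into one kernel-verified Lean document; each statement's English description precedes it below -/
import Mathlib

section
/- Let d ≥ 2, let K be a convex body in ℝ^d and let D = diam(K) be its diameter. Then for every ε with 0 < ε ≤ D and every point y ∈ ℝ^d with dist(y, K) = ε, the Lebesgue volumes satisfy V_d(K^y) − V_d(K) ≥ (ε/(2D))^d · V_d(K). -/
open MeasureTheory Metric Set

theorem statement1 {d : ℕ} (hd : 2 ≤ d) (K : Set (EuclideanSpace ℝ (Fin d)))
    (hKcomp : IsCompact K) (hKconv : Convex ℝ K) (hKint : (interior K).Nonempty)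
    (ε : ℝ) (hε : 0 < ε) (hεD : ε ≤ diam K)
    (y : EuclideanSpace ℝ (Fin d)) (hy : infDist y K = ε) :
    (ε / (2 * diam K)) ^ d * (volume K).toReal ≤
      (volume (convexHull ℝ (K ∪ {y}))).toReal - (volume K).toReal := by
  have hD : 0 < diam K := hε.trans_le hεD
  set t : ℝ := ε / (2 * diam K) with ht
  have ht0 : 0 < t := by positivity
  have ht1 : t ≤ 1 := by
    rw [ht, div_le_one (by positivity)]
    linarith
  obtain ⟨p, hpK, hp⟩ := hKcomp.exists_infDist_eq_dist (hKint.mono interior_subset) y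
  set M : Set (EuclideanSpace ℝ (Fin d)) := AffineMap.homothety y t '' K with hM
  have hMvol : volume.real M = t ^ d * volume.real K := by
    rw [measureReal_def, hM, Measure.addHaar_image_homothety, ENNReal.toReal_mul,
      ENNReal.toReal_ofReal (abs_nonneg _), finrank_euclideanSpace_fin,
      abs_of_nonneg (by positivity), measureReal_def]
  have hMball : M ⊆ closedBall y ε := by
    rintro _ ⟨x, hx, rfl⟩
    have hxy : dist y x ≤ 2 * diam K := by
      have := dist_le_diam_of_mem hKcomp.isBounded hpK hx
      linarith [dist_triangle y p x]
    rw [mem_closedBall, dist_homothety_center, Real.norm_of_nonneg ht0.le]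
    calc t * dist y x ≤ t * (2 * diam K) := by gcongr
      _ = ε := by rw [ht]; field_simp
  have hdisj : Disjoint K (M \ sphere y ε) := by
    rw [Set.disjoint_left]
    rintro x hxK ⟨hxM, hxS⟩
    refine hxS (le_antisymm (hMball hxM) ?_)
    rw [dist_comm, ← hy]
    exact infDist_le_dist_of_mem hxK
  have hyH : y ∈ convexHull ℝ (K ∪ {y}) := subset_convexHull ℝ _ (by simp)
  have hKH : K ⊆ convexHull ℝ (K ∪ {y}) := subset_union_left.trans (subset_convexHull ℝ _)
  have hMH : M ⊆ convexHull ℝ (K ∪ {y}) := by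
    rintro _ ⟨x, hx, rfl⟩
    rw [AffineMap.homothety_eq_lineMap]
    exact (convex_convexHull ℝ _).lineMap_mem hyH (hKH hx) ⟨ht0.le, ht1⟩
  have hHfin : volume (convexHull ℝ (K ∪ {y})) ≠ ⊤ :=
    (isBounded_convexHull.2 (hKcomp.union isCompact_singleton).isBounded).measure_lt_top.ne
  have hMmeas : MeasurableSet (M \ sphere y ε) :=
    ((hKcomp.image (AffineMap.homothety_continuous y t)).measurableSet).diff
      isClosed_sphere.measurableSet
  have hsphere : volume (M \ sphere y ε) = volume M :=
    measure_sdiff_null (Measure.addHaar_sphere_of_ne_zero _ _ hε.ne')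
  have hsum : volume.real K + volume.real M ≤ volume.real (convexHull ℝ (K ∪ {y})) := by
    have hMfin : volume (M \ sphere y ε) ≠ ⊤ :=
      ((measure_mono (sdiff_subset.trans hMH)).trans_lt hHfin.lt_top).ne
    calc volume.real K + volume.real M = volume.real K + volume.real (M \ sphere y ε) := by
          rw [measureReal_def volume (M \ _), hsphere, measureReal_def volume M]
      _ = volume.real (K ∪ M \ sphere y ε) :=
          (measureReal_union hdisj hMmeas hKcomp.measure_lt_top.ne hMfin).symm
      _ ≤ volume.real (convexHull ℝ (K ∪ {y})) :=
          measureReal_mono (union_subset hKH (sdiff_subset.trans hMH)) hHfin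
  rw [← measureReal_def, ← measureReal_def, ← hMvol]
  linarith
end

section
/- Let d ≥ 2 and let K be a convex body in ℝ^d such that a ball of radius r > 0 slides freely inside K. Then there exists a constant c > 0 (depending on K, d) such that for every ε with 0 < ε ≤ 1 and every point y ∈ ℝ^d with dist(y, K) = ε, the Lebesgue volumes satisfy V_d(K^y) − V_d(K) ≥ c·ε^{(d+1)/2}. -/
open MeasureTheory Metric Set

section InnerProductGeometry

variable {E : Type*} [NormedAddCommGroup E] [InnerProductSpace ℝ E]

/-- For a unit vector `u`, the linear map scaling by `q ^ 2` along `u` and by `q` on the orthogonal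
complement of `u`. -/
noncomputable def parabolicScaling (u : E) (q : ℝ) : E →ₗ[ℝ] E :=
  q • LinearMap.transvection (innerₛₗ ℝ u) ((q - 1) • u)

theorem parabolicScaling_apply (u : E) (q : ℝ) (g : E) :
    parabolicScaling u q g = q • (g + inner ℝ u g • (q - 1) • u) := by
  simp [parabolicScaling, LinearMap.transvection.apply]

theorem inner_parabolicScaling {u : E} (hu : ‖u‖ = 1) (q : ℝ) (g : E) :
    inner ℝ u (parabolicScaling u q g) = q ^ 2 * inner ℝ u g := by
  simp only [parabolicScaling_apply, inner_smul_right, inner_add_right,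
    real_inner_self_eq_norm_sq, hu]
  ring

theorem det_parabolicScaling [FiniteDimensional ℝ E] {u : E} (hu : ‖u‖ = 1) (q : ℝ) :
    LinearMap.det (parabolicScaling u q) = q ^ (Module.finrank ℝ E + 1) := by
  have h : inner ℝ u ((q - 1) • u) = q - 1 := by
    rw [inner_smul_right, real_inner_self_eq_norm_sq, hu]
    ring
  rw [parabolicScaling, LinearMap.det_smul, LinearMap.transvection.det, innerₛₗ_apply_apply, h,
    add_sub_cancel, pow_succ]

/-- A point `x` of a ball lying on a supporting hyperplane with unit normal `u` is the point of the
ball extremal in direction `u`. -/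
theorem center_eq_of_supporting {u x z : E} {r : ℝ} (hu : ‖u‖ = 1) (hr : 0 ≤ r)
    (hx : x ∈ closedBall z r) (hs : ∀ w ∈ closedBall z r, inner ℝ u (w - x) ≤ 0) :
    z = x - r • u := by
  have h1 := hs (z + r • u) (by simp [norm_smul, hu, abs_of_nonneg hr])
  have h2 : inner ℝ u (z - x) + r ≤ 0 := by
    have h : z + r • u - x = (z - x) + r • u := by abel
    rw [h, inner_add_right, inner_smul_right, real_inner_self_eq_norm_sq, hu] at h1
    linarith
  have h3 : ‖z - x‖ ≤ r := by rwa [mem_closedBall, dist_comm, dist_eq_norm] at hx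
  have h4 : ‖(z - x) + r • u‖ ^ 2 ≤ 0 := by
    rw [norm_add_sq_real, inner_smul_right, real_inner_comm, norm_smul, hu, Real.norm_eq_abs,
      mul_one, sq_abs]
    nlinarith [norm_nonneg (z - x), mul_nonneg hr (neg_nonneg.2 h2)]
  have h5 : (z - x) + r • u = 0 := by
    rw [← norm_eq_zero]
    exact pow_eq_zero_iff two_ne_zero |>.1 (le_antisymm h4 (sq_nonneg _))
  rw [← sub_eq_zero, ← h5]
  abel

/-- The cap of a ball of radius `r` together with a point at height `q ^ 2` above its pole contains
a parabolically rescaled ball of a radius `ρ` independent of `q`. -/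
theorem add_parabolicScaling_mem_convexHull {u x g : E} {r α ρ q : ℝ} (hu : ‖u‖ = 1)
    (hα : 0 < α) (hα1 : α ≤ 1) (hαr : α ≤ r) (hρα : 8 * ρ ≤ α)
    (hq1 : q ^ 2 ≤ 1) (hg : g ∈ ball ((1 / 2 : ℝ) • u) ρ) :
    0 < inner ℝ u g ∧ x + parabolicScaling u q g ∈
      convexHull ℝ (closedBall (x - r • u) r ∪ {x + q ^ 2 • u}) := by
  set s := inner ℝ u g with hs
  set w := g - s • u with hw
  have huu : inner ℝ u u = (1 : ℝ) := by rw [real_inner_self_eq_norm_sq, hu, one_pow]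
  have huw : inner ℝ u w = 0 := by
    rw [hw, inner_sub_right, inner_smul_right, huu, ← hs]; ring
  have hgw : g - (1 / 2 : ℝ) • u = w + (s - 1 / 2) • u := by
    rw [hw]; module
  have hpyth (t c : ℝ) : ‖t • w + c • u‖ ^ 2 = t ^ 2 * ‖w‖ ^ 2 + c ^ 2 := by
    rw [norm_add_sq_real, inner_smul_right, inner_smul_left, real_inner_comm, huw, norm_smul,
      norm_smul, hu, Real.norm_eq_abs, Real.norm_eq_abs, mul_pow, sq_abs, mul_one, sq_abs]
    ring
  have hgρ : ‖g - (1 / 2 : ℝ) • u‖ < ρ := by rwa [mem_ball, dist_eq_norm] at hg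
  have hρ0 : 0 < ρ := (norm_nonneg _).trans_lt hgρ
  have hsum : ‖w‖ ^ 2 + (s - 1 / 2) ^ 2 < ρ ^ 2 := by
    have h := hpyth 1 (s - 1 / 2)
    rw [one_smul, ← hgw] at h
    nlinarith [norm_nonneg (g - (1 / 2 : ℝ) • u)]
  have hsρ : |s - 1 / 2| < ρ := abs_lt_of_sq_lt_sq (by nlinarith [sq_nonneg ‖w‖]) hρ0.le
  obtain ⟨hs1, hs2⟩ := abs_lt.1 hsρ
  have hs0 : 0 < s := by linarith
  refine ⟨hs0, ?_⟩
  set μ := (1 - s) / (1 + α) with hμ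
  have hμα : μ * (1 + α) = 1 - s := by rw [hμ]; field_simp
  have hμ8 : 1 / 8 ≤ μ := by
    rw [hμ, le_div_iff₀ (by linarith)]; linarith
  have hμ1 : μ ≤ 1 := by
    rw [hμ, div_le_one (by linarith)]; linarith
  have hμ0 : 0 < μ := by linarith
  have hb : x - (α * q ^ 2) • u + (q / μ) • w ∈ closedBall (x - r • u) r := by
    have h : x - (α * q ^ 2) • u + (q / μ) • w - (x - r • u)
        = (q / μ) • w + (r - α * q ^ 2) • u := by module
    rw [mem_closedBall, dist_eq_norm, h]
    refine abs_le_of_sq_le_sq' ?_ (by linarith) |>.2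
    rw [hpyth]
    have h1 : (q / μ) ^ 2 ≤ 64 * q ^ 2 := by
      rw [div_pow, div_le_iff₀ (by positivity)]
      nlinarith [sq_nonneg q, mul_le_mul hμ8 hμ8 (by norm_num) hμ0.le]
    have h2 : 64 * ‖w‖ ^ 2 ≤ α ^ 2 := by nlinarith [sq_nonneg (s - 1 / 2)]
    have h3 : (q / μ) ^ 2 * ‖w‖ ^ 2 ≤ q ^ 2 * α ^ 2 := by
      nlinarith [mul_le_mul_of_nonneg_right h1 (sq_nonneg ‖w‖),
        mul_le_mul_of_nonneg_left h2 (sq_nonneg q)]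
    have h4 : q ^ 2 * α ^ 2 ≤ q ^ 2 * (α * r) := by
      have : α ^ 2 ≤ α * r := by nlinarith
      gcongr
    have h5 : (α * q ^ 2) * (α * q ^ 2) ≤ (α * q ^ 2) * r := by
      have : α * q ^ 2 ≤ r := by nlinarith
      gcongr
    nlinarith
  have hcomb : x + parabolicScaling u q g
      = (1 - μ) • (x + q ^ 2 • u) + μ • (x - (α * q ^ 2) • u + (q / μ) • w) := by
    have hgs : g = w + s • u := by rw [hw]; abel
    have h1 : μ • (q / μ) • w = q • w := by rw [smul_smul, mul_div_cancel₀ _ hμ0.ne']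
    have hs' : s = 1 - μ * (1 + α) := by linarith
    rw [parabolicScaling_apply, ← hs, smul_add μ, h1]
    nth_rewrite 1 [hgs]
    rw [hs']
    module
  rw [hcomb]
  exact convex_convexHull ℝ _
    (subset_convexHull ℝ _ (mem_union_right _ (mem_singleton _)))
    (subset_convexHull ℝ _ (mem_union_left _ hb)) (by linarith) hμ0.le (sub_add_cancel 1 μ)

/-- A nearest point `x` of a convex compact set to an outside point `y`, with the unit vector `u`
pointing from `x` to `y`, which is normal to a supporting hyperplane at `x`. -/
theorem exists_supporting_of_infDist_eq {K : Set E} (hK : IsCompact K) (hne : K.Nonempty)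
    (hconv : Convex ℝ K) {y : E} {ε : ℝ} (hε : 0 < ε) (hy : infDist y K = ε) :
    ∃ x ∈ K, ∃ u : E, ‖u‖ = 1 ∧ y = x + ε • u ∧ ∀ w ∈ K, inner ℝ u (w - x) ≤ 0 := by
  obtain ⟨x, hx, hxy⟩ := hK.exists_infDist_eq_dist hne y
  have hnorm : ‖y - x‖ = ε := by rw [← dist_eq_norm, ← hxy, hy]
  refine ⟨x, hx, ε⁻¹ • (y - x), ?_, ?_, fun w hw => ?_⟩
  · rw [norm_smul, hnorm, norm_inv, Real.norm_of_nonneg hε.le, inv_mul_cancel₀ hε.ne']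
  · rw [smul_inv_smul₀ hε.ne', add_sub_cancel]
  · have hmin : ‖y - x‖ = ⨅ w : K, ‖y - w‖ := by
      simp only [← dist_eq_norm]
      rw [← hxy, infDist_eq_iInf]
    rw [real_inner_smul_left]
    exact mul_nonpos_of_nonneg_of_nonpos (inv_nonneg.2 hε.le)
      ((norm_eq_iInf_iff_real_inner_le_zero hconv hx).1 hmin w hw)

end InnerProductGeometry

theorem statement2 {d : ℕ} (hd : 2 ≤ d) (K : Set (EuclideanSpace ℝ (Fin d)))
    (hKcomp : IsCompact K) (hKconv : Convex ℝ K) (hKint : (interior K).Nonempty)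
    (r : ℝ) (hr : 0 < r)
    (hslide : ∀ x ∈ K, ∃ z : EuclideanSpace ℝ (Fin d),
      x ∈ closedBall z r ∧ closedBall z r ⊆ K) :
    ∃ c : ℝ, 0 < c ∧ ∀ ε : ℝ, 0 < ε → ε ≤ 1 →
      ∀ y : EuclideanSpace ℝ (Fin d), infDist y K = ε →
        c * ε ^ (((d : ℝ) + 1) / 2) ≤
          (volume (convexHull ℝ (K ∪ {y}))).toReal - (volume K).toReal := by
  set α := min 1 r
  have hα : 0 < α := lt_min one_pos hr
  have hα1 : α ≤ 1 := min_le_left _ _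
  have hαr : α ≤ r := min_le_right _ _
  set ρ := α / 8 with hρ
  have hρ0 : 0 < ρ := by positivity
  refine ⟨(volume (ball (0 : EuclideanSpace ℝ (Fin d)) ρ)).toReal,
    ENNReal.toReal_pos (measure_ball_pos _ _ hρ0).ne' measure_ball_lt_top.ne, ?_⟩
  intro ε hε hε1 y hy
  obtain ⟨x, hx, u, hu, rfl, hsupp⟩ := exists_supporting_of_infDist_eq hKcomp
    (hKint.mono interior_subset) hKconv hε hy
  obtain ⟨z, hxz, hzK⟩ := hslide x hx
  obtain rfl := center_eq_of_supporting hu hr.le hxz fun w hw => hsupp w (hzK hw)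
  set q := √ε with hqε
  have hq : q ^ 2 = ε := Real.sq_sqrt hε.le
  set S := (fun p => x + p) '' (parabolicScaling u q '' ball ((1 / 2 : ℝ) • u) ρ) with hS
  have hmem (g) (hg : g ∈ ball ((1 / 2 : ℝ) • u) ρ) :=
    add_parabolicScaling_mem_convexHull (x := x) (q := q) hu hα hα1 hαr
      (by linarith : 8 * ρ ≤ α) (by linarith) hg
  have hSsub : S ⊆ convexHull ℝ (K ∪ {x + ε • u}) := by
    rintro _ ⟨_, ⟨g, hg, rfl⟩, rfl⟩
    have h := (hmem g hg).2
    rw [hq] at h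
    exact convexHull_mono (union_subset_union_left _ hzK) h
  have hdisj : Disjoint S K := by
    rw [Set.disjoint_left]
    rintro _ ⟨_, ⟨g, hg, rfl⟩, rfl⟩ hK
    have h := hsupp _ hK
    simp only [add_sub_cancel_left, inner_parabolicScaling hu, hq] at h
    exact (mul_pos hε (hmem g hg).1).not_ge h
  have hSvol : (volume S).toReal = (volume (ball (0 : EuclideanSpace ℝ (Fin d)) ρ)).toReal
      * ε ^ (((d : ℝ) + 1) / 2) := by
    have hpow : q ^ (d + 1) = ε ^ (((d : ℝ) + 1) / 2) := by
      rw [← Real.rpow_natCast, hqε, Real.sqrt_eq_rpow, ← Real.rpow_mul hε.le]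
      push_cast
      ring_nf
    rw [hS, image_add_left, measure_preimage_add, Measure.addHaar_image_linearMap,
      det_parabolicScaling hu, finrank_euclideanSpace_fin, hpow, Measure.addHaar_ball_center,
      ENNReal.toReal_mul, abs_of_nonneg (by positivity), ENNReal.toReal_ofReal (by positivity),
      mul_comm]
  have hfin : volume (convexHull ℝ (K ∪ {x + ε • u})) ≠ ⊤ :=
    (isBounded_convexHull.2 (hKcomp.isBounded.union Bornology.isBounded_singleton)).measure_lt_top.ne
  have hKsub : K ⊆ convexHull ℝ (K ∪ {x + ε • u}) :=
    subset_union_left.trans (subset_convexHull ℝ _)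
  have hle : volume S + volume K ≤ volume (convexHull ℝ (K ∪ {x + ε • u})) := by
    rw [← measure_union hdisj hKcomp.measurableSet]
    exact measure_mono (union_subset hSsub hKsub)
  have hle' := ENNReal.toReal_mono hfin hle
  rw [ENNReal.toReal_add (measure_ne_top_of_subset hSsub hfin) hKcomp.measure_lt_top.ne,
    hSvol] at hle'
  linarith
end

section
/- Let d ≥ 2 and let K be a convex body in ℝ^d such that a ball of radius r > 0 slides freely inside K. Let φ be a Borel measure on the unit sphere S^{d-1} satisfying φ ≤ a·σ for some constant a > 0. Then there exists a constant c > 0 (depending on K, a, d) such that for every ε > 0 and every point y ∈ ℝ^d with dist(y, K) = ε, one has ∫_{S^{d-1}} [h(K^y, u) − h(K, u)] dφ(u) ≤ c·ε^{(d+1)/2}. -/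
open MeasureTheory Metric Set
open scoped InnerProductSpace ENNReal

/-- The support function of a set `K`: `h(K, u) = sup_{x ∈ K} ⟪x, u⟫`. -/
noncomputable def suppFn {d : ℕ} (K : Set (EuclideanSpace ℝ (Fin d)))
    (u : EuclideanSpace ℝ (Fin d)) : ℝ :=
  sSup ((fun x => ⟪x, u⟫_ℝ) '' K)

/-- Spherical Lebesgue measure on the unit sphere of `ℝ^d`: the `(d-1)`-dimensional
Hausdorff measure restricted to the sphere. -/
noncomputable def sphericalMeasure (d : ℕ) :
    Measure (EuclideanSpace ℝ (Fin d)) :=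
  (μH[(d : ℝ) - 1]).restrict (sphere (0 : EuclideanSpace ℝ (Fin d)) 1)

/-- Coordinates orthogonal to `b 0` are expanding, up to a constant, on the part of the unit sphere
where the coordinate along `b 0` is at least `1 / 2`. -/
theorem norm_sub_le_of_orthonormalBasis {n : ℕ} (hn : 1 ≤ n)
    (b : OrthonormalBasis (Fin (n + 1)) ℝ (EuclideanSpace ℝ (Fin (n + 1))))
    {u w : EuclideanSpace ℝ (Fin (n + 1))} (hu : ‖u‖ = 1) (hw : ‖w‖ = 1)
    (hu0 : 1 / 2 ≤ ⟪b 0, u⟫_ℝ) (hw0 : 1 / 2 ≤ ⟪b 0, w⟫_ℝ) {M : ℝ} (hM : 0 ≤ M)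
    (h : ∀ i : Fin n, |⟪b i.succ, u⟫_ℝ - ⟪b i.succ, w⟫_ℝ| ≤ M) :
    ‖u - w‖ ≤ 3 * n * M := by
  have hn' : (1 : ℝ) ≤ n := by exact_mod_cast hn
  have expand : ∀ x : EuclideanSpace ℝ (Fin (n + 1)),
      ‖x‖ ^ 2 = ⟪b 0, x⟫_ℝ ^ 2 + ∑ i : Fin n, ⟪b i.succ, x⟫_ℝ ^ 2 := by
    intro x
    rw [← b.sum_sq_norm_inner_right x, Fin.sum_univ_succ]
    simp
  have coord : ∀ (i : Fin n) (x : EuclideanSpace ℝ (Fin (n + 1))), ‖x‖ = 1 →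
      |⟪b i.succ, x⟫_ℝ| ≤ 1 := by
    intro i x hx
    simpa [hx] using abs_real_inner_le_norm (b i.succ) x
  have hsum : (⟪b 0, u⟫_ℝ - ⟪b 0, w⟫_ℝ) * (⟪b 0, u⟫_ℝ + ⟪b 0, w⟫_ℝ) =
      -∑ i : Fin n, (⟪b i.succ, u⟫_ℝ - ⟪b i.succ, w⟫_ℝ) *
        (⟪b i.succ, u⟫_ℝ + ⟪b i.succ, w⟫_ℝ) := by
    have e1 := expand u
    have e2 := expand w
    rw [hu] at e1
    rw [hw] at e2
    have e3 : ∑ i : Fin n, (⟪b i.succ, u⟫_ℝ - ⟪b i.succ, w⟫_ℝ) *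
        (⟪b i.succ, u⟫_ℝ + ⟪b i.succ, w⟫_ℝ) =
        ∑ i : Fin n, ⟪b i.succ, u⟫_ℝ ^ 2 - ∑ i : Fin n, ⟪b i.succ, w⟫_ℝ ^ 2 := by
      rw [← Finset.sum_sub_distrib]
      exact Finset.sum_congr rfl fun i _ => by ring
    rw [e3]
    linarith
  have h0 : |⟪b 0, u⟫_ℝ - ⟪b 0, w⟫_ℝ| ≤ 2 * n * M := by
    calc |⟪b 0, u⟫_ℝ - ⟪b 0, w⟫_ℝ|
        ≤ |⟪b 0, u⟫_ℝ - ⟪b 0, w⟫_ℝ| * (⟪b 0, u⟫_ℝ + ⟪b 0, w⟫_ℝ) :=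
          le_mul_of_one_le_right (abs_nonneg _) (by linarith)
      _ = |(⟪b 0, u⟫_ℝ - ⟪b 0, w⟫_ℝ) * (⟪b 0, u⟫_ℝ + ⟪b 0, w⟫_ℝ)| := by
          rw [abs_mul, abs_of_pos (show 0 < ⟪b 0, u⟫_ℝ + ⟪b 0, w⟫_ℝ by linarith)]
      _ ≤ ∑ i : Fin n, |(⟪b i.succ, u⟫_ℝ - ⟪b i.succ, w⟫_ℝ) *
            (⟪b i.succ, u⟫_ℝ + ⟪b i.succ, w⟫_ℝ)| := by
          rw [hsum, abs_neg]
          exact Finset.abs_sum_le_sum_abs _ _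
      _ ≤ ∑ _i : Fin n, M * 2 := by
          refine Finset.sum_le_sum fun i _ => ?_
          rw [abs_mul]
          refine mul_le_mul (h i) ?_ (abs_nonneg _) hM
          linarith [abs_add_le ⟪b i.succ, u⟫_ℝ ⟪b i.succ, w⟫_ℝ, coord i u hu, coord i w hw]
      _ = 2 * n * M := by simp; ring
  have hrest : ∑ i : Fin n, ⟪b i.succ, u - w⟫_ℝ ^ 2 ≤ n * M ^ 2 := by
    calc ∑ i : Fin n, ⟪b i.succ, u - w⟫_ℝ ^ 2 ≤ ∑ _i : Fin n, M ^ 2 := by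
          refine Finset.sum_le_sum fun i _ => ?_
          rw [inner_sub_right, ← sq_abs]
          exact pow_le_pow_left₀ (abs_nonneg _) (h i) 2
      _ = n * M ^ 2 := by simp
  have h0sq : ⟪b 0, u - w⟫_ℝ ^ 2 ≤ (2 * n * M) ^ 2 := by
    rw [inner_sub_right, ← sq_abs]
    exact pow_le_pow_left₀ (abs_nonneg _) h0 2
  refine le_of_sq_le_sq ?_ (by positivity)
  rw [expand]
  nlinarith [mul_nonneg (mul_nonneg (sub_nonneg.2 hn') (by positivity : (0 : ℝ) ≤ n))
    (sq_nonneg M), mul_nonneg (sq_nonneg (n : ℝ)) (sq_nonneg M)]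

/-- A unit vector of `ℝ^(n+1)` is the first vector of some orthonormal basis. -/
theorem exists_orthonormalBasis_zero_eq {n : ℕ} {v : EuclideanSpace ℝ (Fin (n + 1))}
    (hv : ‖v‖ = 1) :
    ∃ b : OrthonormalBasis (Fin (n + 1)) ℝ (EuclideanSpace ℝ (Fin (n + 1))), b 0 = v := by
  obtain ⟨b, hb⟩ := Orthonormal.exists_orthonormalBasis_extension_of_card_eq (𝕜 := ℝ)
    (ι := Fin (n + 1)) (E := EuclideanSpace ℝ (Fin (n + 1))) (by simp) (v := fun _ => v)
    (s := {0}) (by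
      refine ⟨fun _ => hv, fun i j hij => (hij (Subsingleton.elim i j)).elim⟩)
  exact ⟨b, hb 0 rfl⟩

/-- Upper bound for the measure of spherical caps of radius at most `1`. -/
theorem hausdorffMeasure_cap_le {n : ℕ} (hn : 1 ≤ n) {v : EuclideanSpace ℝ (Fin (n + 1))}
    (hv : ‖v‖ = 1) {ρ : ℝ} (hρ : 0 ≤ ρ) (hρ1 : ρ ≤ 1) :
    μH[(n : ℝ)] (closedBall v ρ ∩ sphere (0 : EuclideanSpace ℝ (Fin (n + 1))) 1) ≤
      ENNReal.ofReal ((6 * n) ^ n * ρ ^ n) := by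
  obtain ⟨b, rfl⟩ := exists_orthonormalBasis_zero_eq hv
  set s := closedBall (b 0) ρ ∩ sphere (0 : EuclideanSpace ℝ (Fin (n + 1))) 1 with hs
  have hnorm : ∀ x ∈ s, ‖x‖ = 1 := fun x hx => by simpa using hx.2
  have hhalf : ∀ x ∈ s, 1 / 2 ≤ ⟪b 0, x⟫_ℝ := by
    intro x hx
    have h1 : ‖x - b 0‖ ≤ ρ := by simpa [dist_eq_norm] using hx.1
    have h2 := norm_sub_sq_real x (b 0)
    rw [hnorm x hx, hv, real_inner_comm] at h2
    nlinarith [norm_nonneg (x - b 0)]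
  let T : s → (Fin n → ℝ) := fun x i => ⟪b i.succ, (x : EuclideanSpace ℝ (Fin (n + 1)))⟫_ℝ
  have hT : AntilipschitzWith (3 * n) T := by
    refine AntilipschitzWith.of_le_mul_dist fun x y => ?_
    rw [Subtype.dist_eq, dist_eq_norm]
    push_cast
    refine norm_sub_le_of_orthonormalBasis hn b (hnorm x x.2) (hnorm y y.2) (hhalf x x.2)
      (hhalf y y.2) dist_nonneg fun i => ?_
    exact dist_le_pi_dist (T x) (T y) i
  have hsub : T '' univ ⊆ closedBall 0 ρ := by
    rintro _ ⟨x, -, rfl⟩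
    rw [mem_closedBall, dist_pi_le_iff hρ]
    intro i
    have h1 : ‖(x : EuclideanSpace ℝ (Fin (n + 1))) - b 0‖ ≤ ρ := by
      simpa [dist_eq_norm] using x.2.1
    have h2 : ⟪b i.succ, b 0⟫_ℝ = 0 := b.orthonormal.2 (Fin.succ_ne_zero i)
    have h3 := abs_real_inner_le_norm (b i.succ) ((x : EuclideanSpace ℝ (Fin (n + 1))) - b 0)
    rw [inner_sub_right, h2, sub_zero, b.norm_eq_one, one_mul] at h3
    simpa [T, Real.dist_eq] using h3.trans h1
  have himg : μH[(n : ℝ)] s = μH[(n : ℝ)] (univ : Set s) := by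
    rw [← isometry_subtype_coe.hausdorffMeasure_image (Or.inl (Nat.cast_nonneg n)) univ]
    simp
  have hvol : (μH[(n : ℝ)] : Measure (Fin n → ℝ)) = volume := by
    simpa using hausdorffMeasure_pi_real (ι := Fin n)
  calc μH[(n : ℝ)] s = μH[(n : ℝ)] (univ : Set s) := himg
    _ ≤ ((3 * n : NNReal) : ℝ≥0∞) ^ (n : ℝ) * μH[(n : ℝ)] (T '' univ) :=
        hT.le_hausdorffMeasure_image (Nat.cast_nonneg n) univ
    _ ≤ ((3 * n : NNReal) : ℝ≥0∞) ^ (n : ℝ) * volume (closedBall (0 : Fin n → ℝ) ρ) := by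
        rw [hvol]
        gcongr
    _ = ENNReal.ofReal ((6 * n) ^ n * ρ ^ n) := by
        rw [Real.volume_pi_closedBall _ hρ, ENNReal.rpow_natCast, Fintype.card_fin,
          show ((3 * n : NNReal) : ℝ≥0∞) = ENNReal.ofReal (3 * n) by
            rw [ENNReal.ofReal, Real.toNNReal_mul (by norm_num)]
            simp,
          ← ENNReal.ofReal_pow (by positivity), ← ENNReal.ofReal_mul (by positivity)]
        congr 1
        rw [← mul_pow, ← mul_pow]
        ring

/-- The unit sphere of `ℝ^(n+1)` has finite `n`-dimensional Hausdorff measure. -/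
theorem hausdorffMeasure_sphere_lt_top {n : ℕ} (hn : 1 ≤ n) :
    μH[(n : ℝ)] (sphere (0 : EuclideanSpace ℝ (Fin (n + 1))) 1) < ∞ := by
  refine (isCompact_sphere _ _).measure_lt_top_of_nhdsWithin fun v hv => ?_
  refine ⟨closedBall v 1 ∩ sphere 0 1, ?_, ?_⟩
  · exact Filter.inter_mem (mem_nhdsWithin_of_mem_nhds (closedBall_mem_nhds v one_pos))
      self_mem_nhdsWithin
  · exact (hausdorffMeasure_cap_le hn (by simpa using hv) zero_le_one le_rfl).trans_lt
      ENNReal.ofReal_lt_top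

/-- Spherical caps of radius `ρ` have measure at most a constant times `ρ ^ n`. -/
theorem exists_sphericalMeasure_closedBall_le {n : ℕ} (hn : 1 ≤ n) :
    ∃ C : ℝ, 0 < C ∧ ∀ v : EuclideanSpace ℝ (Fin (n + 1)), ‖v‖ = 1 → ∀ ρ : ℝ, 0 ≤ ρ →
      sphericalMeasure (n + 1) (closedBall v ρ) ≤ ENNReal.ofReal (C * ρ ^ n) := by
  set A := (μH[(n : ℝ)] (sphere (0 : EuclideanSpace ℝ (Fin (n + 1))) 1)).toReal with hA
  have hA0 : 0 ≤ A := ENNReal.toReal_nonneg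
  have hn0 : 0 < n := hn
  refine ⟨(6 * n) ^ n + A, by positivity, fun v hv ρ hρ => ?_⟩
  rw [sphericalMeasure, Measure.restrict_apply measurableSet_closedBall,
    show ((n + 1 : ℕ) : ℝ) - 1 = n by push_cast; ring]
  have hρn : 0 ≤ ρ ^ n := pow_nonneg hρ n
  rcases le_total ρ 1 with h1 | h1
  · refine (hausdorffMeasure_cap_le hn hv hρ h1).trans (ENNReal.ofReal_le_ofReal ?_)
    nlinarith [mul_nonneg hA0 hρn]
  · refine (measure_mono inter_subset_right).trans ?_
    rw [← ENNReal.ofReal_toReal (hausdorffMeasure_sphere_lt_top hn).ne, ← hA]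
    refine ENNReal.ofReal_le_ofReal ?_
    have h2 : 1 ≤ ρ ^ n := one_le_pow₀ h1
    have h3 : (0 : ℝ) ≤ (6 * n) ^ n := by positivity
    nlinarith [mul_nonneg h3 hρn, mul_nonneg hA0 (sub_nonneg.2 h2)]

theorem inner_le_suppFn {d : ℕ} {K : Set (EuclideanSpace ℝ (Fin d))} (hK : IsCompact K)
    {x : EuclideanSpace ℝ (Fin d)} (hx : x ∈ K) (u : EuclideanSpace ℝ (Fin d)) :
    ⟪x, u⟫_ℝ ≤ suppFn K u :=
  le_csSup (hK.image (by fun_prop)).bddAbove (mem_image_of_mem _ hx)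

theorem inner_le_of_mem_convexHull_union {d : ℕ} {K : Set (EuclideanSpace ℝ (Fin d))}
    (hK : IsCompact K) (x y u : EuclideanSpace ℝ (Fin d)) (hx : x ∈ convexHull ℝ (K ∪ {y})) :
    ⟪x, u⟫_ℝ ≤ max (suppFn K u) ⟪y, u⟫_ℝ := by
  have hconv : Convex ℝ {x | ⟪x, u⟫_ℝ ≤ max (suppFn K u) ⟪y, u⟫_ℝ} :=
    convex_halfSpace_le ⟨fun a b => inner_add_left a b u,
      fun c a => by rw [real_inner_smul_left, smul_eq_mul]⟩ _
  refine convexHull_min ?_ hconv hx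
  rintro z (hz | rfl)
  · exact (inner_le_suppFn hK hz u).trans (le_max_left _ _)
  · exact le_max_right (suppFn K u) _

theorem suppFn_convexHull_union_le {d : ℕ} {K : Set (EuclideanSpace ℝ (Fin d))}
    (hK : IsCompact K) (y u : EuclideanSpace ℝ (Fin d)) :
    suppFn (convexHull ℝ (K ∪ {y})) u ≤ max (suppFn K u) ⟪y, u⟫_ℝ := by
  refine csSup_le (Set.Nonempty.image _ ⟨y, subset_convexHull ℝ _ (Or.inr rfl)⟩) ?_
  rintro _ ⟨x, hx, rfl⟩
  exact inner_le_of_mem_convexHull_union hK x y u hx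

theorem suppFn_le_suppFn_convexHull_union {d : ℕ} {K : Set (EuclideanSpace ℝ (Fin d))}
    (hK : IsCompact K) (hne : K.Nonempty) (y u : EuclideanSpace ℝ (Fin d)) :
    suppFn K u ≤ suppFn (convexHull ℝ (K ∪ {y})) u := by
  refine csSup_le_csSup ⟨max (suppFn K u) ⟪y, u⟫_ℝ, ?_⟩ (hne.image _)
    (image_mono (subset_union_left.trans (subset_convexHull ℝ _)))
  rintro _ ⟨x, hx, rfl⟩
  exact inner_le_of_mem_convexHull_union hK x y u hx

/-- If a ball of radius `r` slides freely inside `K`, then a point at distance `ε` from `K` lies at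
distance `r + ε` from the center of a ball of radius `r` contained in `K`. -/
theorem exists_eq_add_smul_of_slides {d : ℕ} {K : Set (EuclideanSpace ℝ (Fin d))}
    (hK : IsCompact K) (hconv : Convex ℝ K) (hne : K.Nonempty) {r : ℝ} (hr : 0 < r)
    (hslide : ∀ x ∈ K, ∃ z : EuclideanSpace ℝ (Fin d),
      x ∈ closedBall z r ∧ closedBall z r ⊆ K)
    {ε : ℝ} (hε : 0 < ε) {y : EuclideanSpace ℝ (Fin d)} (hy : infDist y K = ε) :
    ∃ z v : EuclideanSpace ℝ (Fin d), closedBall z r ⊆ K ∧ ‖v‖ = 1 ∧ y = z + (r + ε) • v := by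
  obtain ⟨p, hpK, hp⟩ := hK.exists_infDist_eq_dist hne y
  obtain ⟨z, hpz, hzK⟩ := hslide p hpK
  have hyp : ‖y - p‖ = ε := by rw [← dist_eq_norm, ← hp, hy]
  have hvar : ∀ w ∈ K, ⟪y - p, w - p⟫_ℝ ≤ 0 := by
    refine (norm_eq_iInf_iff_real_inner_le_zero hconv hpK).1 ?_
    rw [← dist_eq_norm, ← hp, infDist_eq_iInf]
    simp_rw [dist_eq_norm]
  set v := ε⁻¹ • (y - p) with hv
  have hv1 : ‖v‖ = 1 := by
    rw [hv, norm_smul, hyp, Real.norm_of_nonneg (by positivity), inv_mul_cancel₀ hε.ne']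
  have hεv : ε • v = y - p := by rw [hv, smul_inv_smul₀ hε.ne']
  have hball : z + r • v ∈ K := hzK (by simp [norm_smul, hv1, abs_of_pos hr])
  have hinner : r ≤ ⟪p - z, v⟫_ℝ := by
    have h1 := hvar _ hball
    rw [← hεv, real_inner_smul_left] at h1
    have h2 : ⟪v, z + r • v - p⟫_ℝ ≤ 0 := by
      by_contra! h
      exact absurd h1 (not_le.2 (mul_pos hε h))
    have h3 : z + r • v - p = r • v - (p - z) := by abel
    rw [h3, inner_sub_right, real_inner_smul_right, real_inner_self_eq_norm_sq, hv1,
      real_inner_comm] at h2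
    linarith
  have hpz' : ‖p - z‖ ≤ r := by simpa [dist_eq_norm] using hpz
  have hpeq : p - z = r • v := by
    rw [← sub_eq_zero, ← norm_eq_zero, ← sq_eq_zero_iff]
    refine le_antisymm ?_ (sq_nonneg _)
    rw [norm_sub_sq_real, real_inner_smul_right, norm_smul, hv1, Real.norm_of_nonneg hr.le]
    nlinarith [norm_nonneg (p - z)]
  refine ⟨z, v, hzK, hv1, ?_⟩
  rw [add_smul, ← hpeq, hεv]
  abel

/-- The increment of the support function is at most `ε` and vanishes outside a spherical cap of
radius `√(2 ε / r)`. -/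
theorem suppFn_sub_le_indicator {d : ℕ} {K : Set (EuclideanSpace ℝ (Fin d))}
    (hK : IsCompact K) {r ε : ℝ} (hr : 0 < r) (hε : 0 < ε) {z v u : EuclideanSpace ℝ (Fin d)}
    (hz : closedBall z r ⊆ K) (hv : ‖v‖ = 1) (hu : ‖u‖ = 1) :
    suppFn (convexHull ℝ (K ∪ {z + (r + ε) • v})) u - suppFn K u ≤
      (closedBall v (√(2 * ε / r))).indicator (fun _ => ε) u := by
  have h1 := suppFn_convexHull_union_le hK (z + (r + ε) • v) u
  have h2 : ⟪z, u⟫_ℝ + r ≤ suppFn K u := by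
    have h := inner_le_suppFn hK (x := z + r • u)
      (hz (by simp [norm_smul, hu, abs_of_pos hr])) u
    rwa [inner_add_left, real_inner_smul_left, real_inner_self_eq_norm_sq, hu, one_pow,
      mul_one] at h
  rw [inner_add_left, real_inner_smul_left] at h1
  have h3 : ⟪v, u⟫_ℝ ≤ 1 := by simpa [hv, hu] using real_inner_le_norm v u
  by_cases hmem : u ∈ closedBall v (√(2 * ε / r))
  · rw [indicator_of_mem hmem]
    have h4 : (r + ε) * ⟪v, u⟫_ℝ ≤ r + ε := mul_le_of_le_one_right (by positivity) h3
    rcases max_cases (suppFn K u) (⟪z, u⟫_ℝ + (r + ε) * ⟪v, u⟫_ℝ) with h | h <;> linarith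
  · rw [indicator_of_notMem hmem]
    rw [mem_closedBall, not_le, dist_eq_norm] at hmem
    rw [Real.sqrt_lt' ((Real.sqrt_nonneg _).trans_lt hmem), norm_sub_sq_real, hu, hv,
      real_inner_comm, div_lt_iff₀ hr] at hmem
    have h4 : (r + ε) * ⟪v, u⟫_ℝ ≤ r := by
      have h5 : r * ⟪v, u⟫_ℝ ≤ r - ε := by linarith
      have h6 : r * ((r + ε) * ⟪v, u⟫_ℝ) ≤ r * r := by
        nlinarith [mul_le_mul_of_nonneg_left h5 (by positivity : 0 ≤ r + ε)]
      exact le_of_mul_le_mul_left h6 hr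
    rcases max_cases (suppFn K u) (⟪z, u⟫_ℝ + (r + ε) * ⟪v, u⟫_ℝ) with h | h <;> linarith

theorem statement4 {d : ℕ} (hd : 2 ≤ d) (K : Set (EuclideanSpace ℝ (Fin d)))
    (hKcomp : IsCompact K) (hKconv : Convex ℝ K) (hKint : (interior K).Nonempty)
    (r : ℝ) (hr : 0 < r)
    (hslide : ∀ x ∈ K, ∃ z : EuclideanSpace ℝ (Fin d),
      x ∈ closedBall z r ∧ closedBall z r ⊆ K)
    (φ : Measure (EuclideanSpace ℝ (Fin d))) (a : ℝ) (ha : 0 < a)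
    (hφ : φ ≤ ENNReal.ofReal a • sphericalMeasure d) :
    ∃ c : ℝ, 0 < c ∧ ∀ ε : ℝ, 0 < ε →
      ∀ y : EuclideanSpace ℝ (Fin d), infDist y K = ε →
        (∫ u in sphere (0 : EuclideanSpace ℝ (Fin d)) 1,
            (suppFn (convexHull ℝ (K ∪ {y})) u - suppFn K u) ∂φ) ≤
          c * ε ^ (((d : ℝ) + 1) / 2) := by
  obtain ⟨n, rfl⟩ : ∃ n, d = n + 1 := ⟨d - 1, by omega⟩
  have hne : K.Nonempty := hKint.mono interior_subset
  obtain ⟨C, hC, hcap⟩ := exists_sphericalMeasure_closedBall_le (n := n) (by omega)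
  refine ⟨a * C * √(2 / r) ^ n, by positivity, fun ε hε y hy => ?_⟩
  obtain ⟨z, v, hzK, hv, rfl⟩ := exists_eq_add_smul_of_slides hKcomp hKconv hne hr hslide hε hy
  set ρ := √(2 * ε / r) with hρ
  have hmeas : φ.restrict (sphere 0 1) (closedBall v ρ) ≤ ENNReal.ofReal (a * (C * ρ ^ n)) :=
    calc φ.restrict (sphere 0 1) (closedBall v ρ) ≤ φ (closedBall v ρ) :=
          Measure.restrict_apply_le _ _
      _ ≤ ENNReal.ofReal a * sphericalMeasure (n + 1) (closedBall v ρ) := hφ _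
      _ ≤ ENNReal.ofReal a * ENNReal.ofReal (C * ρ ^ n) := by
          gcongr
          exact hcap v hv ρ (Real.sqrt_nonneg _)
      _ = ENNReal.ofReal (a * (C * ρ ^ n)) := (ENNReal.ofReal_mul ha.le).symm
  calc ∫ u in sphere (0 : EuclideanSpace ℝ (Fin (n + 1))) 1,
        (suppFn (convexHull ℝ (K ∪ {z + (r + ε) • v})) u - suppFn K u) ∂φ
      ≤ ∫ u in sphere (0 : EuclideanSpace ℝ (Fin (n + 1))) 1,
          (closedBall v ρ).indicator (fun _ => ε) u ∂φ := by
        refine integral_mono_of_nonneg (Filter.Eventually.of_forall fun u => ?_) ?_ ?_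
        · exact sub_nonneg.2 (suppFn_le_suppFn_convexHull_union hKcomp hne _ u)
        · exact (integrable_indicator_iff measurableSet_closedBall).2
            (integrableOn_const (hmeas.trans_lt ENNReal.ofReal_lt_top).ne)
        · refine ae_restrict_of_forall_mem isClosed_sphere.measurableSet fun u hu => ?_
          exact suppFn_sub_le_indicator hKcomp hr hε hzK hv (by simpa using hu)
    _ = (φ.restrict (sphere 0 1)).real (closedBall v ρ) * ε := by
        rw [integral_indicator_const _ measurableSet_closedBall, smul_eq_mul]
    _ ≤ a * (C * ρ ^ n) * ε := by
        gcongr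
        exact ENNReal.toReal_le_of_le_ofReal (by positivity) hmeas
    _ = a * C * √(2 / r) ^ n * ε ^ ((((n + 1 : ℕ) : ℝ) + 1) / 2) := by
        have h1 : ρ = √(2 / r) * √ε := by
          rw [hρ, ← Real.sqrt_mul (by positivity)]
          congr 1
          ring
        have h2 : ε ^ ((((n + 1 : ℕ) : ℝ) + 1) / 2) = √ε ^ n * ε := by
          rw [Real.sqrt_eq_rpow, ← Real.rpow_natCast, ← Real.rpow_mul hε.le,
            ← Real.rpow_add_one hε.ne']
          congr 1
          push_cast
          ring
        rw [h1, h2, mul_pow]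
        ring
end

section
/- Let d ≥ 2 and let K be a convex body in ℝ^d which slides freely inside a ball of radius R. Then there are constants c₀, c₁ > 0 (depending on K, d) such that for every ε with 0 < ε < c₀ there exists a finite set S of points, each at distance exactly ε from K, with cardinality |S| ≥ c₁·ε^{−1/2}, such that for any two distinct points x, y ∈ S the closed segment [x, y] meets the interior of K. -/
open Metric Set
open scoped Pointwise

/-- Cancellation for Minkowski sums of a point with a nonempty compact set. -/
theorem mem_of_forall_add_mem_add {E : Type*} [NormedAddCommGroup E] [NormedSpace ℝ E]
    {K M : Set E} (hK : IsClosed K) (hKconv : Convex ℝ K) (hM : IsCompact M) (hM0 : M.Nonempty)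
    {z : E} (hz : ∀ y ∈ M, z + y ∈ K + M) : z ∈ K := by
  by_contra hzK
  obtain ⟨f, u, hfu, huz⟩ := geometric_hahn_banach_closed_point hKconv hK hzK
  obtain ⟨y, hy, hmax⟩ := hM.exists_isMaxOn hM0 f.continuous.continuousOn
  obtain ⟨k, hk, y', hy', hsum⟩ := Set.mem_add.1 (hz y hy)
  have h₁ : f k + f y' = f z + f y := by rw [← map_add, ← map_add, hsum]
  have h₂ : f y' ≤ f y := hmax hy'
  linarith [hfu k hk]

/-- The midpoint of a chord of length `ℓ` of a ball of radius `R` has depth at least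
`ℓ ^ 2 / (8 * R)`. -/
theorem dist_midpoint_le_of_mem_closedBall {E : Type*} [NormedAddCommGroup E]
    [InnerProductSpace ℝ E] {p q w : E} {R : ℝ} (hR : 0 < R) (hp : p ∈ closedBall w R)
    (hq : q ∈ closedBall w R) : dist (midpoint ℝ p q) w ≤ R - dist p q ^ 2 / (8 * R) := by
  have hp' : ‖p - w‖ ≤ R := by simpa [dist_eq_norm] using hp
  have hq' : ‖q - w‖ ≤ R := by simpa [dist_eq_norm] using hq
  have hm : midpoint ℝ p q - w = (2⁻¹ : ℝ) • ((p - w) + (q - w)) := by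
    rw [midpoint_eq_smul_add, invOf_eq_inv]; module
  have hpq : p - q = (p - w) - (q - w) := by abel
  rw [dist_eq_norm, dist_eq_norm, hm, hpq, norm_smul]
  generalize p - w = a at *
  generalize q - w = b at *
  have hpar := parallelogram_law_with_norm ℝ a b
  have h₁ : ‖a‖ * ‖a‖ ≤ R * R := by gcongr
  have h₂ : ‖b‖ * ‖b‖ ≤ R * R := by gcongr
  obtain ⟨t, ht⟩ : ∃ t, t = ‖a - b‖ ^ 2 / (8 * R) := ⟨_, rfl⟩
  have ht' : ‖a - b‖ ^ 2 = 8 * R * t := by rw [ht]; field_simp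
  rw [← ht]
  have h₃ : t ≤ R := by
    by_contra! h
    nlinarith [mul_self_nonneg ‖a + b‖]
  norm_num
  apply le_of_sq_le_sq _ (by linarith)
  nlinarith [sq_nonneg t]

/-- A summand of a ball of radius `R` contains a ball around the midpoint of each of its chords. -/
theorem ball_midpoint_subset_of_add_eq_closedBall {E : Type*} [NormedAddCommGroup E]
    [InnerProductSpace ℝ E] {K M : Set E} (hK : IsClosed K) (hKconv : Convex ℝ K)
    (hM : IsCompact M) {w : E} {R : ℝ} (hR : 0 < R) (h : K + M = closedBall w R)
    {p q : E} (hp : p ∈ K) (hq : q ∈ K) :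
    ball (midpoint ℝ p q) (dist p q ^ 2 / (8 * R)) ⊆ K := by
  intro z hz
  have hM0 : M.Nonempty := by
    have : (K + M).Nonempty := by rw [h]; exact nonempty_closedBall.2 hR.le
    exact this.of_add_right
  refine mem_of_forall_add_mem_add hK hKconv hM hM0 fun y hy ↦ ?_
  have hpy : p + y ∈ closedBall w R := h ▸ Set.add_mem_add hp hy
  have hqy : q + y ∈ closedBall w R := h ▸ Set.add_mem_add hq hy
  have hmid := dist_midpoint_le_of_mem_closedBall hR hpy hqy
  have hmy : midpoint ℝ (p + y) (q + y) = midpoint ℝ p q + y := by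
    simp only [midpoint_eq_smul_add, invOf_eq_inv]; module
  rw [hmy, dist_add_right] at hmid
  rw [h, mem_closedBall]
  have htri := dist_triangle (z + y) (midpoint ℝ p q + y) w
  rw [dist_add_right] at htri
  linarith [mem_ball.1 hz]

/-- Two points at distance `ε` from a summand `K` of a ball of radius `R` which are at least
`4 * √R * √ε` apart span a segment meeting the interior of `K`. -/
theorem segment_inter_interior_nonempty {E : Type*} [NormedAddCommGroup E]
    [InnerProductSpace ℝ E] {K M : Set E} (hK : IsCompact K) (hKconv : Convex ℝ K)
    (hK0 : K.Nonempty) (hM : IsCompact M) {w : E} {R : ℝ} (hR : 0 < R)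
    (h : K + M = closedBall w R) {ε : ℝ} (hε : 0 < ε) (hεR : ε < R / 16) {x y : E}
    (hx : infDist x K = ε) (hy : infDist y K = ε) (hxy : 4 * √R * √ε ≤ dist x y) :
    (segment ℝ x y ∩ interior K).Nonempty := by
  obtain ⟨p, hp, hxp⟩ := hK.exists_infDist_eq_dist hK0 x
  obtain ⟨q, hq, hyq⟩ := hK.exists_infDist_eq_dist hK0 y
  rw [hx] at hxp
  rw [hy] at hyq
  refine ⟨midpoint ℝ x y, midpoint_mem_segment x y,
    interior_maximal (ball_midpoint_subset_of_add_eq_closedBall hK.isClosed hKconv hM hR h hp hq)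
      isOpen_ball ?_⟩
  have hmid : dist (midpoint ℝ x y) (midpoint ℝ p q) ≤ ε := by
    have := dist_midpoint_midpoint_le x y p q
    rw [← hxp, ← hyq] at this
    linarith
  have htri : dist x y ≤ ε + dist p q + ε := by
    have := dist_triangle4 x p q y
    rw [dist_comm q y] at this
    linarith
  have hrR : 0 < √R := Real.sqrt_pos.2 hR
  have hrε : 0 < √ε := Real.sqrt_pos.2 hε
  have hsR : √R ^ 2 = R := Real.sq_sqrt hR.le
  have hsε : √ε ^ 2 = ε := Real.sq_sqrt hε.le
  have hsmall : 4 * √ε ≤ √R := by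
    apply le_of_sq_le_sq _ hrR.le
    nlinarith
  have hpq : 3 * (√R * √ε) ≤ dist p q := by nlinarith
  rw [mem_ball]
  refine hmid.trans_lt ?_
  rw [lt_div_iff₀ (by positivity)]
  have hsq : (3 * (√R * √ε)) ^ 2 ≤ dist p q ^ 2 := by gcongr
  have : (3 * (√R * √ε)) ^ 2 = 9 * (R * ε) := by rw [mul_pow, mul_pow, hsR, hsε]; norm_num
  nlinarith [mul_pos hR hε]

/-- Every line parallel to a coordinate axis through a point of a compact set contains points at
every positive distance from the set. -/
theorem exists_infDist_add_single_eq {ι : Type*} [Fintype ι] [DecidableEq ι]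
    {K : Set (EuclideanSpace ℝ ι)} (hK : IsCompact K) {a : EuclideanSpace ℝ ι} (ha : a ∈ K)
    (i : ι) {ε : ℝ} (hε : 0 ≤ ε) :
    ∃ s : ℝ, infDist (a + s • EuclideanSpace.single i (1 : ℝ)) K = ε := by
  have hcont : Continuous fun s : ℝ ↦ infDist (a + s • EuclideanSpace.single i (1 : ℝ)) K :=
    (continuous_infDist_pt K).comp (by fun_prop)
  refine mem_range_of_exists_le_of_exists_ge hcont ⟨0, ?_⟩ ?_
  · simpa [infDist_zero_of_mem ha] using hε
  · refine ⟨diam K + ε, (le_infDist ⟨a, ha⟩).2 fun y hy ↦ ?_⟩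
    have h₁ : dist a y ≤ diam K := dist_le_diam_of_mem hK.isBounded ha hy
    have h₂ := dist_triangle (a + (diam K + ε) • EuclideanSpace.single i (1 : ℝ)) y a
    rw [dist_self_add_left, norm_smul, Real.norm_of_nonneg (by positivity), dist_comm y] at h₂
    simp only [PiLp.norm_single, norm_one, mul_one] at h₂
    linarith

theorem statement5 {d : ℕ} (hd : 2 ≤ d) (K : Set (EuclideanSpace ℝ (Fin d)))
    (hKcomp : IsCompact K) (hKconv : Convex ℝ K) (hKint : (interior K).Nonempty)
    (R : ℝ) (hR : 0 < R)
    (hslide : ∃ M : Set (EuclideanSpace ℝ (Fin d)), IsCompact M ∧ Convex ℝ M ∧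
      ∃ w : EuclideanSpace ℝ (Fin d), K + M = closedBall w R) :
    ∃ c₀ c₁ : ℝ, 0 < c₀ ∧ 0 < c₁ ∧ ∀ ε : ℝ, 0 < ε → ε < c₀ →
      ∃ S : Finset (EuclideanSpace ℝ (Fin d)),
        (∀ x ∈ S, infDist x K = ε) ∧
        c₁ * ε ^ (-(1 : ℝ) / 2) ≤ (S.card : ℝ) ∧
        ∀ x ∈ S, ∀ y ∈ S, x ≠ y → (segment ℝ x y ∩ interior K).Nonempty := by
  obtain ⟨M, hM, -, w, hKM⟩ := hslide
  obtain ⟨a, ha⟩ := hKint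
  obtain ⟨r, hr, hrK⟩ := nhds_basis_closedBall.mem_iff.1 (mem_interior_iff_mem_nhds.1 ha)
  let i : Fin d := ⟨0, by lia⟩
  let j : Fin d := ⟨1, by lia⟩
  have hij : i ≠ j := by simp [i, j]
  have hrR : 0 < √R := Real.sqrt_pos.2 hR
  refine ⟨R / 16, r / (4 * √R), by positivity, by positivity, fun ε hε hεR ↦ ?_⟩
  have hrε : 0 < √ε := Real.sqrt_pos.2 hε
  obtain ⟨D, hD⟩ : ∃ D, D = 4 * √R * √ε := ⟨_, rfl⟩
  have hD0 : 0 < D := by rw [hD]; positivity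
  let N := ⌊r / D⌋₊ + 1
  have hx : ∀ k : ℕ, ∃ x : EuclideanSpace ℝ (Fin d), k < N → infDist x K = ε ∧
      x i = a i + k * D := by
    intro k
    by_cases hk : k < N
    · have hkD : k * D ≤ r := by
        rw [← le_div_iff₀ hD0]
        exact (Nat.le_floor_iff (by positivity)).1 (Nat.lt_succ_iff.1 hk)
      have hmem : a + (k * D) • EuclideanSpace.single i (1 : ℝ) ∈ K := by
        apply hrK
        rw [mem_closedBall, dist_self_add_left, norm_smul, Real.norm_of_nonneg (by positivity)]
        simpa using hkD
      obtain ⟨s, hs⟩ := exists_infDist_add_single_eq hKcomp hmem j hε.le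
      exact ⟨_, fun _ ↦ ⟨hs, by simp [hij]⟩⟩
    · exact ⟨0, fun h ↦ absurd h hk⟩
  choose x hx using hx
  have hsep : ∀ k < N, ∀ l < N, k ≠ l → D ≤ dist (x k) (x l) := by
    intro k hk l hl hkl
    have hcoord : |x k i - x l i| ≤ dist (x k) (x l) := by
      simpa [dist_eq_norm] using PiLp.norm_apply_le (x k - x l) i
    have hone : (1 : ℝ) ≤ |(k : ℝ) - l| := by
      exact_mod_cast Int.one_le_abs (sub_ne_zero.2 (Nat.cast_injective.ne hkl : (k : ℤ) ≠ l))
    rw [(hx k hk).2, (hx l hl).2, add_sub_add_left_eq_sub, ← sub_mul, abs_mul,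
      abs_of_pos hD0] at hcoord
    nlinarith
  have hinj : Set.InjOn x (Finset.range N) := by
    intro k hk l hl hkl
    by_contra hne
    have := hsep k (by simpa using hk) l (by simpa using hl) hne
    rw [hkl, dist_self] at this
    linarith
  refine ⟨(Finset.range N).image x, ?_, ?_, ?_⟩
  · simp only [Finset.mem_image, Finset.mem_range]
    rintro _ ⟨k, hk, rfl⟩
    exact (hx k hk).1
  · rw [Finset.card_image_of_injOn hinj, Finset.card_range]
    have hpow : ε ^ (-(1 : ℝ) / 2) = (√ε)⁻¹ := by
      rw [neg_div, Real.rpow_neg hε.le, Real.sqrt_eq_rpow]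
    have hquot : r / (4 * √R) * (√ε)⁻¹ = r / D := by rw [hD]; field_simp
    rw [hpow, hquot]
    simpa [N] using (Nat.lt_floor_add_one (r / D)).le
  · simp only [Finset.mem_image, Finset.mem_range]
    rintro _ ⟨k, hk, rfl⟩ _ ⟨l, hl, rfl⟩ hne
    exact segment_inter_interior_nonempty hKcomp hKconv ⟨a, interior_subset ha⟩ hM hR hKM hε hεR
      (hx k hk).1 (hx l hl).1 (hD ▸ hsep k hk l hl fun h ↦ hne (congrArg x h))
end

section
/- Let d ≥ 2 and let K be a convex body in ℝ^d which slides freely inside a ball of radius R. Let 0 < ε < 2R and let x, y ∈ ℝ^d be points with dist(x, K) = dist(y, K) = ε. If ‖x − y‖ ≥ 4·√(Rε), then the closed segment [x, y] intersects the interior of K. -/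
open Metric Set
open scoped Pointwise

section SlidingFreely

variable {E : Type*} [NormedAddCommGroup E] [InnerProductSpace ℝ E]

/-- If `K + M` is a ball of radius `R`, then at a support point `p` of `K` with unit outer normal `u`
the body `K` is contained in the ball of radius `R` touching its supporting hyperplane at `p`. -/
theorem subset_closedBall_of_add_eq_closedBall {K M : Set E} {w u p : E} {R : ℝ} (hR : 0 ≤ R)
    (hM : IsCompact M) (h : K + M = closedBall w R) (hu : ‖u‖ = 1) (hp : p ∈ K)
    (hmax : ∀ k ∈ K, inner ℝ u k ≤ inner ℝ u p) : K ⊆ closedBall (p - R • u) R := by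
  have huu : inner ℝ u u = 1 := by rw [real_inner_self_eq_norm_sq, hu]; norm_num
  have htop : w + R • u ∈ K + M := by
    rw [h, mem_closedBall, dist_eq_norm, add_sub_cancel_left, norm_smul, hu, mul_one,
      Real.norm_of_nonneg hR]
  obtain ⟨k', hk', m', hm', hkm⟩ := mem_add.1 htop
  obtain ⟨m, hm, hmmax⟩ := hM.exists_isMaxOn ⟨m', hm'⟩
    (f := fun z => inner ℝ u z) (by fun_prop)
  have hz : ‖p + m - w‖ ≤ R := by
    have : p + m ∈ closedBall w R := h ▸ add_mem_add hp hm
    rwa [mem_closedBall, dist_eq_norm] at this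
  have hge : R ≤ inner ℝ u (p + m - w) := by
    have h1 := hmax k' hk'
    have h2 : inner ℝ u m' ≤ inner ℝ u m := hmmax hm'
    have h3 := congrArg (fun z => inner ℝ u z) hkm
    simp only [inner_add_right, inner_smul_right, huu] at h3
    rw [inner_sub_right, inner_add_right]
    linarith
  have heq : p + m - w = R • u := by
    rw [← sub_eq_zero, ← norm_eq_zero, ← sq_eq_zero_iff]
    refine le_antisymm ?_ (sq_nonneg _)
    rw [norm_sub_sq_real, inner_smul_right, real_inner_comm, norm_smul, hu,
      Real.norm_of_nonneg hR]
    nlinarith [norm_nonneg (p + m - w)]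
  intro k hk
  have hkm : k + m ∈ closedBall w R := h ▸ add_mem_add hk hm
  rw [mem_closedBall, dist_eq_norm] at hkm ⊢
  rwa [← heq, show k - (p - (p + m - w)) = k + m - w by abel]

/-- A point within `ε < 2R` of a subset of a ball of radius `R`, and on the outer side of the
tangent hyperplane of the ball at `p`, is closer than `2√(Rε)` to `p`. -/
theorem norm_sub_lt_of_infDist_le {K : Set E} {u p x : E} {R ε : ℝ} (hR : 0 < R)
    (hε : 0 < ε) (hεR : ε < 2 * R) (hu : ‖u‖ = 1) (hK : IsCompact K) (hne : K.Nonempty)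
    (hsub : K ⊆ closedBall (p - R • u) R) (hx : infDist x K ≤ ε)
    (hpx : inner ℝ u p ≤ inner ℝ u x) : ‖x - p‖ < 2 * Real.sqrt (R * ε) := by
  obtain ⟨q, hq, hqx⟩ := hK.exists_infDist_eq_dist hne x
  have h1 : ‖(x - p) + R • u‖ ≤ R + ε := by
    have h2 := hsub hq
    rw [mem_closedBall] at h2
    have h3 := dist_triangle x q (p - R • u)
    rw [dist_eq_norm x (p - R • u), show x - (p - R • u) = x - p + R • u by abel] at h3
    linarith
  have h4 : ‖(x - p) + R • u‖ ^ 2 ≤ (R + ε) ^ 2 := by gcongr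
  rw [norm_add_sq_real, inner_smul_right, real_inner_comm, inner_sub_right, norm_smul, hu,
    Real.norm_of_nonneg hR.le] at h4
  have h5 : 0 ≤ R * (inner ℝ u x - inner ℝ u p) := mul_nonneg hR.le (sub_nonneg.2 hpx)
  refine lt_of_pow_lt_pow_left₀ 2 (by positivity) ?_
  rw [mul_pow, Real.sq_sqrt (by positivity)]
  nlinarith

end SlidingFreely

theorem statement6 {d : ℕ} (hd : 2 ≤ d) (K : Set (EuclideanSpace ℝ (Fin d)))
    (hKcomp : IsCompact K) (hKconv : Convex ℝ K) (hKint : (interior K).Nonempty)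
    (R : ℝ) (hR : 0 < R)
    (hslide : ∃ M : Set (EuclideanSpace ℝ (Fin d)), IsCompact M ∧ Convex ℝ M ∧
      ∃ w : EuclideanSpace ℝ (Fin d), K + M = closedBall w R)
    (ε : ℝ) (hε : 0 < ε) (hε2R : ε < 2 * R)
    (x y : EuclideanSpace ℝ (Fin d)) (hx : infDist x K = ε) (hy : infDist y K = ε)
    (hxy : 4 * Real.sqrt (R * ε) ≤ ‖x - y‖) :
    (segment ℝ x y ∩ interior K).Nonempty := by
  obtain ⟨M, hM, -, w, hKM⟩ := hslide
  by_contra hempty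
  have hdisj : Disjoint (interior K) (segment ℝ x y) := by
    rw [disjoint_comm, disjoint_iff_inter_eq_empty]
    exact not_nonempty_iff_eq_empty.1 hempty
  obtain ⟨f, c, hfK, hfc⟩ := geometric_hahn_banach_open hKconv.interior isOpen_interior
    (convex_segment x y) hdisj
  have hne : K.Nonempty := hKint.mono interior_subset
  obtain ⟨a, ha⟩ := hKint
  obtain ⟨v, rfl⟩ := (InnerProductSpace.toDual ℝ (EuclideanSpace ℝ (Fin d))).surjective f
  simp only [InnerProductSpace.toDual_apply_apply] at hfK hfc
  have hv : v ≠ 0 := by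
    rintro rfl
    have h1 := hfK a ha
    have h2 := hfc x (left_mem_segment ℝ x y)
    rw [inner_zero_left] at h1 h2
    linarith
  obtain ⟨p, hp, hpmax⟩ := hKcomp.exists_isMaxOn hne (f := fun z => inner ℝ v z) (by fun_prop)
  have hpc : inner ℝ v p ≤ c := by
    have hpcl : p ∈ closure (interior K) := by
      rw [hKconv.closure_interior_eq_closure_of_nonempty_interior ⟨a, ha⟩]
      exact subset_closure hp
    have hclosed : IsClosed {z | inner ℝ v z ≤ c} :=
      isClosed_le (by fun_prop) continuous_const
    exact closure_minimal (fun z hz => (hfK z hz).le) hclosed hpcl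
  have hu : ‖‖v‖⁻¹ • v‖ = 1 := norm_smul_inv_norm hv
  have hmono : ∀ {s t : EuclideanSpace ℝ (Fin d)}, inner ℝ v s ≤ inner ℝ v t →
      inner ℝ (‖v‖⁻¹ • v) s ≤ inner ℝ (‖v‖⁻¹ • v) t := by
    intro s t hst
    rw [real_inner_smul_left, real_inner_smul_left]
    gcongr
  have hsub := subset_closedBall_of_add_eq_closedBall hR.le hM hKM hu hp
    fun k hk => hmono (hpmax hk)
  have hxp := norm_sub_lt_of_infDist_le hR hε hε2R hu hKcomp hne hsub hx.le
    (hmono (hpc.trans (hfc x (left_mem_segment ℝ x y))))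
  have hyp := norm_sub_lt_of_infDist_le hR hε hε2R hu hKcomp hne hsub hy.le
    (hmono (hpc.trans (hfc y (right_mem_segment ℝ x y))))
  have htri := norm_sub_le_norm_sub_add_norm_sub x p y
  rw [norm_sub_rev p y] at htri
  linarith
end

section
/- Let d ≥ 2, let K ⊂ ℝ^d be a compact convex set and let M ⊂ ℝ^d be a compact convex set such that K + M is a closed ball of radius R (i.e. K slides freely inside a ball of radius R). Let p ∈ K and let u be a unit vector with ⟨p, u⟩ = h(K, u). Then there exists a point z ∈ ℝ^d such that K ⊆ closedBall(z, R) and ⟨p − z, u⟩ = R (so p lies on the boundary sphere of closedBall(z, R) and u is the outer unit normal of that ball at p). -/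
open Metric Set
open scoped InnerProductSpace Pointwise

theorem statement7 {d : ℕ} (hd : 2 ≤ d) (K M : Set (EuclideanSpace ℝ (Fin d)))
    (hKcomp : IsCompact K) (hKconv : Convex ℝ K)
    (hMcomp : IsCompact M) (hMconv : Convex ℝ M)
    (R : ℝ) (hR : 0 < R) (w : EuclideanSpace ℝ (Fin d))
    (hsum : K + M = closedBall w R)
    (p : EuclideanSpace ℝ (Fin d)) (hp : p ∈ K)
    (u : EuclideanSpace ℝ (Fin d)) (hu : ‖u‖ = 1)
    (hpu : ⟪p, u⟫_ℝ = suppFn K u) :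
    ∃ z : EuclideanSpace ℝ (Fin d),
      K ⊆ closedBall z R ∧ ⟪p - z, u⟫_ℝ = R := by
  have huu : ⟪u, u⟫_ℝ = 1 := by rw [real_inner_self_eq_norm_sq, hu, one_pow]
  have hmem : w + R • u ∈ K + M := by
    rw [hsum, mem_closedBall, dist_eq_norm, add_sub_cancel_left, norm_smul, hu, mul_one,
      Real.norm_of_nonneg hR.le]
  obtain ⟨k, hk, m, hm, hkm⟩ := Set.mem_add.mp hmem
  have hball : ∀ x ∈ K, ‖x - (w - m)‖ ≤ R := fun x hx => by
    have hxm : x + m ∈ closedBall w R := hsum ▸ Set.add_mem_add hx hm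
    rwa [mem_closedBall, dist_eq_norm, show x + m - w = x - (w - m) by abel] at hxm
  refine ⟨w - m, fun x hx => by simpa [dist_eq_norm] using hball x hx, le_antisymm ?_ ?_⟩
  · calc ⟪p - (w - m), u⟫_ℝ ≤ ‖p - (w - m)‖ * ‖u‖ := real_inner_le_norm _ _
      _ ≤ R := by rw [hu, mul_one]; exact hball p hp
  · have hkp : ⟪k, u⟫_ℝ ≤ ⟪p, u⟫_ℝ := by
      rw [hpu]
      exact le_csSup (hKcomp.image (by fun_prop)).bddAbove (mem_image_of_mem _ hk)
    have hkR : k - (w - m) = R • u := by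
      rw [← sub_eq_zero, ← sub_eq_zero.mpr hkm]; abel
    calc R = ⟪k - (w - m), u⟫_ℝ := by rw [hkR, real_inner_smul_left, huu, mul_one]
      _ ≤ ⟪p - (w - m), u⟫_ℝ := by
        rw [inner_sub_left, inner_sub_left p]; exact sub_le_sub_right hkp _
end
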